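/- With f ∈ NRV_{σ+1}, σ > p - 2 > -1, F(t) = ∫_B^t f(s) ds, and 𝓕(t) = ((p-1)/p)^{1/p} ∫_t^∞ F(x)^{-1/p} dx, one has lim_{t→∞} F(t)^{(p-1)/p} / (f(t) 𝓕(t)) = (1/p) (p/(p-1))^{1/p} (1 - p/(σ+2)). -/

import Mathlib

open Filter MeasureTheory Real

open scoped Topology

/-!
Write `T t = ∫_t^∞ F⁻¹ᐟᵖ`. Up to the constant `((p - 1) / p)⁻¹ᐟᵖ`, the quotient whose limit is
sought is the product of `F t / (t f t)` and `t F(t)⁻¹ᐟᵖ / T t`. A positive function `g` is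
normalized regularly varying of index `ρ` when `x g'(x) / g(x) → ρ`, and Karamata's theorem says
that integration raises the index by one, both for primitives (`ρ > -1`) and for tails (`ρ < -1`).
So `F` has index `σ + 2`, which is the inverse of the limit of the first factor; then `F⁻¹ᐟᵖ` has
index `-(σ + 2) / p < -1`, and the second factor tends to `(σ + 2) / p - 1`.
-/

section Calculus

variable {f f' g g' : ℝ → ℝ} {a x : ℝ}

theorem tendsto_atTop_of_eventually_hasDerivAt_le
    (hf : ∀ᶠ x in atTop, HasDerivAt f (f' x) x) (hg : ∀ᶠ x in atTop, HasDerivAt g (g' x) x)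
    (hle : ∀ᶠ x in atTop, g' x ≤ f' x) (hgtop : Tendsto g atTop atTop) :
    Tendsto f atTop atTop := by
  obtain ⟨a, ha⟩ := eventually_atTop.1 (hf.and (hg.and hle))
  have hderiv : ∀ x ∈ Set.Ici a, HasDerivAt (fun x => f x - g x) (f' x - g' x) x :=
    fun x hx => (ha x hx).1.sub (ha x hx).2.1
  have hmono : MonotoneOn (fun x => f x - g x) (Set.Ici a) :=
    monotoneOn_of_hasDerivWithinAt_nonneg (convex_Ici a)
      (fun x hx => (hderiv x hx).continuousAt.continuousWithinAt)
      (fun x hx => (hderiv x (interior_subset hx)).hasDerivWithinAt)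
      (fun x hx => sub_nonneg.2 (ha x (interior_subset hx)).2.2)
  refine tendsto_atTop_mono' _ ?_ (tendsto_atTop_add_const_left _ (f a - g a) hgtop)
  filter_upwards [eventually_ge_atTop a] with x hx
  exact le_sub_iff_add_le.1 (hmono Set.self_mem_Ici hx hx)

theorem eventually_lt_div_of_tendsto_hasDerivAt_div {d L : ℝ}
    (hf : ∀ᶠ x in atTop, HasDerivAt f (f' x) x) (hg : ∀ᶠ x in atTop, HasDerivAt g (g' x) x)
    (hg' : ∀ᶠ x in atTop, 0 < g' x) (hgtop : Tendsto g atTop atTop)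
    (hlim : Tendsto (fun x => f' x / g' x) atTop (𝓝 L)) (hd : d < L) :
    ∀ᶠ x in atTop, d < f x / g x := by
  obtain ⟨c, hdc, hcL⟩ := exists_between hd
  have hdiff : Tendsto (fun x => f x - d * g x) atTop atTop := by
    refine tendsto_atTop_of_eventually_hasDerivAt_le (g := fun x => (c - d) * g x)
      (f' := fun x => f' x - d * g' x) (g' := fun x => (c - d) * g' x) ?_ ?_ ?_
      (hgtop.const_mul_atTop (sub_pos.2 hdc))
    · filter_upwards [hf, hg] with x hfx hgx using hfx.sub (hgx.const_mul d)
    · filter_upwards [hg] with x hgx using hgx.const_mul (c - d)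
    · filter_upwards [hg', hlim.eventually_const_lt hcL] with x hgx hcx
      rw [lt_div_iff₀ hgx] at hcx
      linarith
  filter_upwards [hdiff.eventually_gt_atTop 0, hgtop.eventually_gt_atTop 0] with x hx hgx
  exact (lt_div_iff₀ hgx).2 (sub_pos.1 hx)

theorem tendsto_div_atTop_of_tendsto_hasDerivAt_div {L : ℝ}
    (hf : ∀ᶠ x in atTop, HasDerivAt f (f' x) x) (hg : ∀ᶠ x in atTop, HasDerivAt g (g' x) x)
    (hg' : ∀ᶠ x in atTop, 0 < g' x) (hgtop : Tendsto g atTop atTop)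
    (hlim : Tendsto (fun x => f' x / g' x) atTop (𝓝 L)) :
    Tendsto (fun x => f x / g x) atTop (𝓝 L) := by
  refine tendsto_order.2 ⟨fun d hd =>
    eventually_lt_div_of_tendsto_hasDerivAt_div hf hg hg' hgtop hlim hd, fun d hd => ?_⟩
  have hlim_neg : Tendsto (fun x => -f' x / g' x) atTop (𝓝 (-L)) := by
    simpa only [neg_div] using hlim.neg
  filter_upwards [eventually_lt_div_of_tendsto_hasDerivAt_div (hf.mono fun x hx => hx.fun_neg)
    hg hg' hgtop hlim_neg (neg_lt_neg hd)] with x hx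
  rwa [neg_div, neg_lt_neg_iff] at hx

theorem intervalIntegrable_of_continuousOn_Ici (hf : ContinuousOn f (Set.Ici a)) (hx : a ≤ x) :
    IntervalIntegrable f volume a x :=
  (hf.mono Set.Icc_subset_Ici_self).intervalIntegrable_of_Icc hx

theorem hasDerivAt_integral_of_continuousOn_Ici (hf : ContinuousOn f (Set.Ici a)) (hx : a < x) :
    HasDerivAt (fun u => ∫ t in a..u, f t) (f x) x :=
  intervalIntegral.integral_hasDerivAt_right (intervalIntegrable_of_continuousOn_Ici hf hx.le)
    ((hf.mono Set.Ioi_subset_Ici_self).stronglyMeasurableAtFilter isOpen_Ioi x hx)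
    (hf.continuousAt (Ici_mem_nhds hx))

theorem continuousOn_integral_of_continuousOn_Ici (hf : ContinuousOn f (Set.Ici a)) :
    ContinuousOn (fun u => ∫ t in a..u, f t) (Set.Ici a) := by
  intro x hx
  have hle : a ≤ x + 1 := by linarith [Set.mem_Ici.1 hx]
  have hIcc := intervalIntegral.continuousOn_primitive_interval'
    (intervalIntegrable_of_continuousOn_Ici hf hle) Set.left_mem_uIcc
  rw [Set.uIcc_of_le hle, ← Set.Ici_inter_Iic] at hIcc
  have hx1 : x < x + 1 := by linarith
  exact (hIcc x ⟨hx, hx1.le⟩).mono_of_mem_nhdsWithin (inter_mem_nhdsWithin _ (Iic_mem_nhds hx1))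

theorem hasDerivAt_integral_Ioi (hint : IntegrableOn f (Set.Ioi a)) (hx : a < x)
    (hf : ContinuousAt f x) : HasDerivAt (fun u => ∫ t in Set.Ioi u, f t) (-f x) x := by
  have hprim : HasDerivAt (fun u => ∫ t in a..u, f t) (f x) x :=
    intervalIntegral.integral_hasDerivAt_right
      ((intervalIntegrable_iff_integrableOn_Ioc_of_le hx.le).2
        (hint.mono_set Set.Ioc_subset_Ioi_self))
      ⟨Set.Ioi a, Ioi_mem_nhds hx, hint.aestronglyMeasurable⟩ hf
  refine (hprim.const_sub (∫ t in Set.Ioi a, f t)).congr_of_eventuallyEq ?_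
  filter_upwards [Ioi_mem_nhds hx] with u hu
  rw [← intervalIntegral.integral_Ioi_sub_Ioi hint (le_of_lt hu), sub_sub_cancel]

theorem eventually_hasDerivAt_integral_Ioi (hint : IntegrableAtFilter f atTop)
    (hf : ∀ᶠ x in atTop, ContinuousAt f x) :
    ∀ᶠ x in atTop, HasDerivAt (fun u => ∫ t in Set.Ioi u, f t) (-f x) x := by
  obtain ⟨s, hs, hfs⟩ := hint
  obtain ⟨a, ha⟩ := mem_atTop_sets.1 hs
  filter_upwards [hf, eventually_gt_atTop a] with x hfx hx
  exact hasDerivAt_integral_Ioi (hfs.mono_set fun y hy => ha y (le_of_lt hy)) hx hfx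

theorem continuousOn_of_eq_mul_rpow_mul_exp {φ : ℝ → ℝ} {c ρ : ℝ} (ha : 0 < a)
    (hφ : ContinuousOn φ (Set.Ici a))
    (hf : ∀ u, a ≤ u → f u = c * u ^ ρ * exp (∫ t in a..u, φ t / t)) :
    ContinuousOn f (Set.Ici a) := by
  have hne : ∀ t ∈ Set.Ici a, t ≠ 0 := fun t ht => (ha.trans_le ht).ne'
  refine ContinuousOn.congr ?_ hf
  exact (continuousOn_const.mul (continuousOn_id.rpow_const fun t ht => Or.inl (hne t ht))).mul
    (continuousOn_integral_of_continuousOn_Ici (hφ.div continuousOn_id hne)).rexp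

end Calculus

/-- Normalized regularly varying functions of index `ρ` at infinity (the class `NRV_ρ`), described
by the convergence of the elasticity `x f'(x) / f(x)` rather than by the representation
`c x^ρ exp (∫ φ(t)/t dt)` with `φ` continuous and `φ → 0`; here `f'` need not be continuous. -/
structure NormalizedRegularlyVarying (f : ℝ → ℝ) (ρ : ℝ) : Prop where
  eventually_pos : ∀ᶠ x in atTop, 0 < f x
  eventually_differentiableAt : ∀ᶠ x in atTop, DifferentiableAt ℝ f x
  tendsto_mul_logDeriv : Tendsto (fun x => x * logDeriv f x) atTop (𝓝 ρ)

namespace NormalizedRegularlyVarying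

variable {f g F : ℝ → ℝ} {ρ τ : ℝ}

theorem of_hasDerivAt {f' : ℝ → ℝ} (hpos : ∀ᶠ x in atTop, 0 < f x)
    (hf : ∀ᶠ x in atTop, HasDerivAt f (f' x) x)
    (hlim : Tendsto (fun x => x * f' x / f x) atTop (𝓝 ρ)) : NormalizedRegularlyVarying f ρ where
  eventually_pos := hpos
  eventually_differentiableAt := hf.mono fun _ hx => hx.differentiableAt
  tendsto_mul_logDeriv := hlim.congr' <| by
    filter_upwards [hf] with x hx
    rw [logDeriv_apply, hx.deriv, mul_div_assoc]

protected theorem congr (hf : NormalizedRegularlyVarying f ρ) (hfg : f =ᶠ[atTop] g) :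
    NormalizedRegularlyVarying g ρ := by
  have hnhds : ∀ᶠ x in atTop, f =ᶠ[𝓝 x] g := by
    obtain ⟨a, ha⟩ := eventually_atTop.1 hfg
    filter_upwards [eventually_gt_atTop a] with x hx
    filter_upwards [Ioi_mem_nhds hx] with y hy using ha y (le_of_lt hy)
  refine ⟨?_, ?_, hf.tendsto_mul_logDeriv.congr' ?_⟩
  · filter_upwards [hf.eventually_pos, hfg] with x hx hfgx using hfgx ▸ hx
  · filter_upwards [hf.eventually_differentiableAt, hnhds] with x hx hfgx
      using hx.congr_of_eventuallyEq hfgx.symm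
  · filter_upwards [hnhds] with x hfgx
    rw [(logDeriv_congr_nhds hfgx).eq_of_nhds]

protected theorem const {c : ℝ} (hc : 0 < c) : NormalizedRegularlyVarying (fun _ => c) 0 :=
  of_hasDerivAt (Eventually.of_forall fun _ => hc)
    (Eventually.of_forall fun x => hasDerivAt_const x c) (by simp)

protected theorem id : NormalizedRegularlyVarying (fun x => x) 1 := by
  refine of_hasDerivAt (eventually_gt_atTop 0) (Eventually.of_forall hasDerivAt_id') ?_
  refine tendsto_const_nhds.congr' ?_
  filter_upwards [eventually_ne_atTop 0] with x hx
  rw [mul_one, div_self hx]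

protected theorem mul (hf : NormalizedRegularlyVarying f ρ) (hg : NormalizedRegularlyVarying g τ) :
    NormalizedRegularlyVarying (fun x => f x * g x) (ρ + τ) := by
  refine ⟨?_, ?_, (hf.tendsto_mul_logDeriv.add hg.tendsto_mul_logDeriv).congr' ?_⟩
  · filter_upwards [hf.eventually_pos, hg.eventually_pos] with x hfx hgx using mul_pos hfx hgx
  · filter_upwards [hf.eventually_differentiableAt, hg.eventually_differentiableAt]
      with x hfx hgx using hfx.fun_mul hgx
  · filter_upwards [hf.eventually_pos, hg.eventually_pos, hf.eventually_differentiableAt,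
      hg.eventually_differentiableAt] with x hfx hgx hfd hgd
    rw [logDeriv_mul x hfx.ne' hgx.ne' hfd hgd, mul_add]

protected theorem rpow (hf : NormalizedRegularlyVarying f ρ) (s : ℝ) :
    NormalizedRegularlyVarying (fun x => f x ^ s) (s * ρ) := by
  refine of_hasDerivAt (f' := fun x => deriv f x * s * f x ^ (s - 1)) ?_ ?_
    ((hf.tendsto_mul_logDeriv.const_mul s).congr' ?_)
  · filter_upwards [hf.eventually_pos] with x hx using rpow_pos_of_pos hx s
  · filter_upwards [hf.eventually_pos, hf.eventually_differentiableAt] with x hx hfx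
      using hfx.hasDerivAt.rpow_const (Or.inl hx.ne')
  · filter_upwards [hf.eventually_pos] with x hx
    have hpow := (rpow_pos_of_pos hx s).ne'
    rw [logDeriv_apply, rpow_sub_one hx.ne']
    field_simp

theorem exp_integral_div {φ : ℝ → ℝ} {a : ℝ} (ha : 0 < a) (hφ : ContinuousOn φ (Set.Ici a))
    (hlim : Tendsto φ atTop (𝓝 ρ)) :
    NormalizedRegularlyVarying (fun u => exp (∫ t in a..u, φ t / t)) ρ := by
  have hdiv : ContinuousOn (fun t => φ t / t) (Set.Ici a) :=
    hφ.div continuousOn_id fun t ht => (ha.trans_le ht).ne'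
  refine of_hasDerivAt (Eventually.of_forall fun u => exp_pos _)
    ((eventually_gt_atTop a).mono fun u hu =>
      (hasDerivAt_integral_of_continuousOn_Ici hdiv hu).exp) (hlim.congr' ?_)
  filter_upwards [eventually_ne_atTop 0] with u hu
  field_simp

theorem of_eq_mul_rpow_mul_exp {φ : ℝ → ℝ} {a c : ℝ} (ha : 0 < a) (hc : 0 < c)
    (hφ : ContinuousOn φ (Set.Ici a)) (hlim : Tendsto φ atTop (𝓝 τ))
    (hf : ∀ u, a ≤ u → f u = c * u ^ ρ * exp (∫ t in a..u, φ t / t)) :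
    NormalizedRegularlyVarying f (ρ + τ) := by
  have hprod := ((NormalizedRegularlyVarying.const hc).mul
    (NormalizedRegularlyVarying.id.rpow ρ)).mul (exp_integral_div ha hφ hlim)
  rw [zero_add, mul_one] at hprod
  exact hprod.congr ((eventually_ge_atTop a).mono fun u hu => (hf u hu).symm)

theorem tendsto_atTop (hf : NormalizedRegularlyVarying f ρ) (hρ : 0 < ρ) :
    Tendsto f atTop atTop := by
  have hlog : Tendsto (fun x => log (f x)) atTop atTop := by
    refine tendsto_atTop_of_eventually_hasDerivAt_le (f' := logDeriv f)
      (g' := fun x => ρ / 2 * x⁻¹) ?_ ?_ ?_ (tendsto_log_atTop.const_mul_atTop (half_pos hρ))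
    · filter_upwards [hf.eventually_pos, hf.eventually_differentiableAt] with x hx hfx
        using hfx.hasDerivAt.log hx.ne'
    · filter_upwards [eventually_ne_atTop 0] with x hx using (hasDerivAt_log hx).const_mul (ρ / 2)
    · filter_upwards [eventually_gt_atTop 0,
        hf.tendsto_mul_logDeriv.eventually_const_lt (half_lt_self hρ)] with x hx hlt
      rw [← div_eq_mul_inv, div_le_iff₀' hx]
      exact hlt.le
  refine (tendsto_exp_atTop.comp hlog).congr' ?_
  filter_upwards [hf.eventually_pos] with x hx using exp_log hx

theorem tendsto_zero (hf : NormalizedRegularlyVarying f ρ) (hρ : ρ < 0) :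
    Tendsto f atTop (𝓝 0) := by
  refine ((hf.rpow (-1)).tendsto_atTop (by linarith)).inv_tendsto_atTop.congr fun x => ?_
  rw [Pi.inv_apply, rpow_neg_one, inv_inv]

theorem isLittleO (hf : NormalizedRegularlyVarying f ρ) (hg : NormalizedRegularlyVarying g τ)
    (h : ρ < τ) : f =o[atTop] g := by
  refine (Asymptotics.isLittleO_iff_tendsto' ?_).2 <|
    ((hf.mul (hg.rpow (-1))).tendsto_zero (by linarith)).congr' ?_
  · filter_upwards [hg.eventually_pos] with x hx hx0 using absurd hx0 hx.ne'
  · filter_upwards with x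
    rw [rpow_neg_one, div_eq_mul_inv]

theorem eventually_continuousAt (hf : NormalizedRegularlyVarying f ρ) :
    ∀ᶠ x in atTop, ContinuousAt f x :=
  hf.eventually_differentiableAt.mono fun _ hx => hx.continuousAt

theorem integrableAtFilter_atTop (hf : NormalizedRegularlyVarying f ρ) (hρ : ρ < -1) :
    IntegrableAtFilter f atTop := by
  obtain ⟨s, hρs, hs⟩ := exists_between hρ
  have hlittle : f =o[atTop] fun x => x ^ s :=
    hf.isLittleO (NormalizedRegularlyVarying.id.rpow s) (by linarith)
  have hmeas : StronglyMeasurableAtFilter f atTop := by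
    obtain ⟨a, ha⟩ := eventually_atTop.1 hf.eventually_continuousAt
    exact ⟨Set.Ici a, Ici_mem_atTop a, ContinuousOn.aestronglyMeasurable
      (fun x hx => (ha x hx).continuousWithinAt) measurableSet_Ici⟩
  exact hlittle.isBigO.integrableAtFilter hmeas (integrableAtFilter_rpow_atTop_iff.2 hs)

theorem eventually_hasDerivAt_id_mul (hf : NormalizedRegularlyVarying f ρ) :
    ∀ᶠ x in atTop, HasDerivAt (fun x => x * f x) (f x * (1 + x * logDeriv f x)) x := by
  filter_upwards [hf.eventually_pos, hf.eventually_differentiableAt] with x hx hfx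
  refine ((hasDerivAt_id' x).fun_mul hfx.hasDerivAt).congr_deriv ?_
  rw [logDeriv_apply]
  field_simp

/-- `x * f x → ∞`, so the primitive eventually grows faster than `log`. -/
theorem tendsto_primitive_atTop (hf : NormalizedRegularlyVarying f ρ) (hρ : -1 < ρ)
    (hF : ∀ᶠ x in atTop, HasDerivAt F (f x) x) : Tendsto F atTop atTop := by
  have hmul : Tendsto (fun x => x * f x) atTop atTop :=
    (NormalizedRegularlyVarying.id.mul hf).tendsto_atTop (by linarith)
  refine tendsto_atTop_of_eventually_hasDerivAt_le hF
    ((eventually_ne_atTop 0).mono fun x hx => hasDerivAt_log hx) ?_ tendsto_log_atTop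
  filter_upwards [eventually_gt_atTop 0, hmul.eventually_ge_atTop 1] with x hx hle
  exact (inv_le_iff_one_le_mul₀' hx).2 hle

theorem tendsto_mul_div_primitive (hf : NormalizedRegularlyVarying f ρ) (hρ : -1 < ρ)
    (hF : ∀ᶠ x in atTop, HasDerivAt F (f x) x) :
    Tendsto (fun x => x * f x / F x) atTop (𝓝 (1 + ρ)) := by
  refine tendsto_div_atTop_of_tendsto_hasDerivAt_div hf.eventually_hasDerivAt_id_mul hF
    hf.eventually_pos (hf.tendsto_primitive_atTop hρ hF)
    ((hf.tendsto_mul_logDeriv.const_add 1).congr' ?_)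
  filter_upwards [hf.eventually_pos] with x hx
  rw [mul_div_cancel_left₀ _ hx.ne']

theorem primitive (hf : NormalizedRegularlyVarying f ρ) (hρ : -1 < ρ)
    (hF : ∀ᶠ x in atTop, HasDerivAt F (f x) x) : NormalizedRegularlyVarying F (1 + ρ) :=
  of_hasDerivAt ((hf.tendsto_primitive_atTop hρ hF).eventually_gt_atTop 0) hF
    (hf.tendsto_mul_div_primitive hρ hF)

theorem tendsto_mul_div_integral_Ioi (hf : NormalizedRegularlyVarying f ρ) (hρ : ρ < -1) :
    Tendsto (fun x => x * f x / ∫ t in Set.Ioi x, f t) atTop (𝓝 (-(1 + ρ))) := by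
  refine HasDerivAt.lhopital_zero_atTop hf.eventually_hasDerivAt_id_mul
    (eventually_hasDerivAt_integral_Ioi (hf.integrableAtFilter_atTop hρ)
      hf.eventually_continuousAt)
    (hf.eventually_pos.mono fun x hx => (neg_neg_of_pos hx).ne)
    ((NormalizedRegularlyVarying.id.mul hf).tendsto_zero (by linarith))
    (tendsto_integral_Ioi_zero tendsto_id) ((hf.tendsto_mul_logDeriv.const_add 1).neg.congr' ?_)
  filter_upwards [hf.eventually_pos] with x hx
  rw [div_neg, mul_div_cancel_left₀ _ hx.ne']

theorem tendsto_primitive_rpow_div_mul_integral_Ioi {q : ℝ} (hf : NormalizedRegularlyVarying f ρ)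
    (hρ : -1 < ρ) (hF : ∀ᶠ x in atTop, HasDerivAt F (f x) x) (hq : 1 < q * (1 + ρ)) :
    Tendsto (fun x => F x ^ (1 - q) / (f x * ∫ t in Set.Ioi x, F t ^ (-q))) atTop
      (𝓝 (q - 1 / (1 + ρ))) := by
  have hρ1 : 1 + ρ ≠ 0 := by linarith
  have hFreg := hf.primitive hρ hF
  have hprim := (hf.tendsto_mul_div_primitive hρ hF).inv₀ hρ1
  have htail := (hFreg.rpow (-q)).tendsto_mul_div_integral_Ioi (by linarith)
  have hlim : (1 + ρ)⁻¹ * -(1 + -q * (1 + ρ)) = q - 1 / (1 + ρ) := by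
    field_simp
    ring
  refine (hlim ▸ hprim.mul htail).congr' ?_
  filter_upwards [hFreg.eventually_pos, eventually_ne_atTop 0] with x hFx hx
  rw [sub_eq_add_neg, rpow_add hFx, rpow_one]
  field_simp

end NormalizedRegularlyVarying

theorem F_power_over_f_tail_limit_general {p σ : ℝ} (hp : 1 < p) (hσ : p - 2 < σ)
    {f F 𝓕 : ℝ → ℝ} (hf : NormalizedRegularlyVarying f (σ + 1))
    (hF : ∀ᶠ t in atTop, HasDerivAt F (f t) t)
    (h𝓕 : ∀ t, 𝓕 t = ((p - 1) / p) ^ ((1 : ℝ) / p) * ∫ x in Set.Ioi t, F x ^ (-(1 : ℝ) / p)) :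
    Tendsto (fun t => F t ^ ((p - 1) / p) / (f t * 𝓕 t)) atTop
      (𝓝 ((1 / p) * (p / (p - 1)) ^ ((1 : ℝ) / p) * (1 - p / (σ + 2)))) := by
  have hp0 : 0 < p := by linarith
  have hσ2 : σ + 2 ≠ 0 := by linarith
  have hq : 1 < 1 / p * (1 + (σ + 1)) := by
    rw [one_div_mul_eq_div, one_lt_div hp0]
    linarith
  have hcore := (hf.tendsto_primitive_rpow_div_mul_integral_Ioi (by linarith) hF hq).const_mul
    ((p / (p - 1)) ^ (1 / p))
  have hlim : (p / (p - 1)) ^ (1 / p) * (1 / p - 1 / (1 + (σ + 1))) =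
      1 / p * (p / (p - 1)) ^ (1 / p) * (1 - p / (σ + 2)) := by
    rw [show 1 + (σ + 1) = σ + 2 by ring]
    field_simp
  refine (hlim ▸ hcore).congr fun t => ?_
  rw [h𝓕, neg_div, ← inv_div, inv_rpow (div_nonneg (by linarith) hp0.le),
    show 1 - 1 / p = (p - 1) / p by rw [sub_div, div_self hp0.ne']]
  ring

theorem F_power_over_f_tail_limit
    (B A₀ p σ : ℝ) (hB : 0 < B) (hA : 0 < A₀) (hp : 1 < p) (hσ : p - 2 < σ)
    (φ : ℝ → ℝ) (hφcont : ContinuousOn φ (Set.Ici B))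
    (hφlim : Tendsto φ atTop (nhds 0))
    (f : ℝ → ℝ)
    (hf : ∀ u, B ≤ u → f u = A₀ * u ^ (σ + 1) * Real.exp (∫ t in B..u, φ t / t))
    (F : ℝ → ℝ) (hF : ∀ t, F t = ∫ s in B..t, f s)
    (𝓕 : ℝ → ℝ)
    (h𝓕 : ∀ t, 𝓕 t = ((p - 1) / p) ^ ((1:ℝ)/p) * ∫ x in Set.Ioi t, F x ^ (-(1:ℝ)/p)) :
    Tendsto (fun t => F t ^ ((p - 1) / p) / (f t * 𝓕 t)) atTop
      (nhds ((1 / p) * (p / (p - 1)) ^ ((1:ℝ)/p) * (1 - p / (σ + 2)))) := by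
  have hfreg : NormalizedRegularlyVarying f (σ + 1) := by
    simpa using NormalizedRegularlyVarying.of_eq_mul_rpow_mul_exp hB hA hφcont hφlim hf
  have hfcont := continuousOn_of_eq_mul_rpow_mul_exp hB hφcont hf
  obtain rfl : F = fun t => ∫ s in B..t, f s := funext hF
  exact F_power_over_f_tail_limit_general hp hσ hfreg ((eventually_gt_atTop B).mono fun t ht =>
    hasDerivAt_integral_of_continuousOn_Ici hfcont ht) h𝓕
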